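/- arXiv:0905.2011 — 4 statements merged into one kernel-verified Lean document; each statement's English description precedes it below -/
import Mathlib

section
/- Let p be a prime, K a field of characteristic p, n ≥ 1 an integer, and W a finite-dimensional K-vector space. Suppose that for each integer ℓ with 0 ≤ ℓ ≤ n(p−1) we are given a K-subspace F_ℓ ⊆ W ⊗_K R^ℓ such that for all 1 ≤ ℓ ≤ n(p−1) and all 1 ≤ i ≤ n the map id_W ⊗ ∂/∂x_i sends F_ℓ into F_{ℓ−1}. Then there exists a K-subspace W' ⊆ W such that F_{n(p−1)} = W' ⊗_K R^{n(p−1)} and W' ⊗_K R^ℓ ⊆ F_ℓ for every 0 ≤ ℓ ≤ n(p−1). -/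
/-!
Let `m = (p - 1, …, p - 1)`. The space `R^{n(p-1)}` is the line spanned by `x^m`, so
`F_{n(p-1)} ⊆ W ⊗ R^{n(p-1)}` has the form `W' ⊗ x^m` for a unique `W' ⊆ W`. Since
`∂/∂xᵢ` sends `x^(k+eᵢ)` to `(kᵢ + 1) x^k` and `kᵢ + 1` is invertible in `K` as long as
`kᵢ + 1 ≤ p - 1`, starting from `w ⊗ x^m` with `w ∈ W'` one reaches every `w ⊗ x^k` with `k ≤ m`
by lowering exponents one at a time, each time dropping one step in the family `F`.
-/

open MvPolynomial TensorProduct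

/-- `R^ℓ`: the `K`-span of monomials `x₁^{k₁} ⋯ xₙ^{kₙ}` with `∑ kᵢ = ℓ` and `0 ≤ kᵢ ≤ p-1`. -/
noncomputable def Rsub (K : Type*) [Field K] (p n ℓ : ℕ) :
    Submodule K (MvPolynomial (Fin n) K) :=
  Submodule.span K { q | ∃ k : Fin n →₀ ℕ, (∀ i, k i ≤ p - 1) ∧ (∑ i, k i) = ℓ ∧
    q = monomial k 1 }

/-- `W ⊗_K R^ℓ` viewed as a subspace of `W ⊗_K K[x₁,…,xₙ]`. -/
noncomputable def WR (K W : Type*) [Field K] [AddCommGroup W] [Module K W] (p n ℓ : ℕ) :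
    Submodule K (W ⊗[K] MvPolynomial (Fin n) K) :=
  LinearMap.range (LinearMap.lTensor W (Rsub K p n ℓ).subtype)

open Finsupp (degree single)
open scoped Nat

section Exponents

variable {σ : Type*}

theorem finsupp_degree_strictMono {R : Type*} [AddCommMonoid R] [PartialOrder R]
    [IsOrderedCancelAddMonoid R] : StrictMono (degree : (σ →₀ R) → R) := by
  classical
  intro k m hkm
  obtain ⟨hle, i, hi⟩ := Pi.lt_def.1 (Finsupp.coe_lt_coe.2 hkm)
  have hmem : i ∈ k.support ∪ m.support := by
    by_contra h
    simp_all
  have degree_eq {l : σ →₀ R} (hl : l.support ⊆ k.support ∪ m.support) :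
      l.degree = ∑ j ∈ k.support ∪ m.support, l j :=
    Finsupp.sum_of_support_subset l hl (fun _ r ↦ r) fun _ _ ↦ rfl
  rw [degree_eq Finset.subset_union_left, degree_eq Finset.subset_union_right]
  exact Finset.sum_lt_sum (fun j _ ↦ hle j) ⟨i, hmem, hi⟩

theorem finsupp_decreasingInduction {m : σ →₀ ℕ} {P : (σ →₀ ℕ) → Prop} (top : P m)
    (step : ∀ k i, k + single i 1 ≤ m → P (k + single i 1) → P k) {k : σ →₀ ℕ} (hk : k ≤ m) :
    P k := by
  suffices descend : ∀ d k : σ →₀ ℕ, k + d ≤ m → P (k + d) → P k by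
    obtain ⟨d, rfl⟩ := exists_add_of_le hk
    exact descend d k le_rfl top
  intro d
  induction d using Finsupp.induction_linear with
  | zero => exact fun k _ ↦ by simp only [add_zero, imp_self]
  | add d e hd he =>
    intro k hle hP
    rw [← add_assoc] at hle hP
    exact hd k (le_self_add.trans hle) (he (k + d) hle hP)
  | single i r =>
    induction r with
    | zero => exact fun k _ ↦ by simp only [Finsupp.single_zero, add_zero, imp_self]
    | succ r ih =>
      intro k hle hP
      rw [Finsupp.single_add, ← add_assoc] at hle hP
      exact ih k (le_self_add.trans hle) (step _ i hle hP)

/-- The exponent `(d, …, d)` of the monomial `∏ᵢ xᵢ^d`. The exponents allowed in `R^ℓ` are those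
below it for `d = p - 1`. -/
noncomputable def constExponent (σ : Type*) [Finite σ] (d : ℕ) : σ →₀ ℕ :=
  Finsupp.equivFunOnFinite.symm fun _ ↦ d

theorem constExponent_apply [Finite σ] (d : ℕ) (i : σ) : constExponent σ d i = d :=
  rfl

theorem degree_constExponent [Fintype σ] (d : ℕ) :
    (constExponent σ d).degree = Fintype.card σ * d := by
  simp [Finsupp.degree_eq_sum, constExponent_apply]

end Exponents

section Lowering

variable {R M σ : Type*} [CommSemiring R] [AddCommMonoid M] [Module R M]

theorem lTensor_pderiv_tmul_monomial_add_single (w : M) (k : σ →₀ ℕ) (i : σ) (a : R) :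
    LinearMap.lTensor M (pderiv i).toLinearMap (w ⊗ₜ[R] monomial (k + single i 1) a) =
      ((k i + 1 : ℕ) : R) • w ⊗ₜ[R] monomial k a := by
  have hpderiv : pderiv i (monomial (k + single i 1) a) =
      ((k i + 1 : ℕ) : R) • monomial k a := by
    simp [pderiv_monomial, smul_monomial, mul_comm]
  rw [LinearMap.lTensor_tmul, ← TensorProduct.tmul_smul, ← hpderiv]
  rfl

theorem tmul_monomial_mem_of_map_pderiv_le {F G : Submodule R (M ⊗[R] MvPolynomial σ R)} {i : σ}
    (hFG : F.map (LinearMap.lTensor M (pderiv i).toLinearMap) ≤ G) {k : σ →₀ ℕ}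
    (hk : IsUnit ((k i + 1 : ℕ) : R)) {w : M} {a : R}
    (hw : w ⊗ₜ[R] monomial (k + single i 1) a ∈ F) : w ⊗ₜ[R] monomial k a ∈ G := by
  rw [← G.smul_mem_iff_of_isUnit hk, ← lTensor_pderiv_tmul_monomial_add_single]
  exact hFG (Submodule.mem_map_of_mem hw)

theorem tmul_monomial_mem_of_le {F : ℕ → Submodule R (M ⊗[R] MvPolynomial σ R)} {m : σ →₀ ℕ}
    (hF : ∀ ℓ < m.degree, ∀ i,
      (F (ℓ + 1)).map (LinearMap.lTensor M (pderiv i).toLinearMap) ≤ F ℓ)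
    (hm : ∀ i, IsUnit ((m i)! : R)) {w : M} {a : R} (hw : w ⊗ₜ[R] monomial m a ∈ F m.degree)
    {k : σ →₀ ℕ} (hk : k ≤ m) : w ⊗ₜ[R] monomial k a ∈ F k.degree := by
  refine finsupp_decreasingInduction (P := fun k ↦ w ⊗ₜ[R] monomial k a ∈ F k.degree) hw
    (fun k i hk ih ↦ ?_) hk
  have hdeg : (k + single i 1).degree = k.degree + 1 := by
    rw [map_add, Finsupp.degree_single]
  have hlt : k.degree < m.degree := by
    rw [← Nat.add_one_le_iff, ← hdeg]
    exact Finsupp.degree_mono hk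
  have hki : k i + 1 ≤ m i := by simpa using hk i
  have hunit : IsUnit ((k i + 1 : ℕ) : R) := by
    have hfac := (hm i).natCast_factorial_of_le hki
    rw [Nat.factorial_succ, Nat.cast_mul] at hfac
    exact isUnit_of_mul_isUnit_left hfac
  exact tmul_monomial_mem_of_map_pderiv_le (hF _ hlt i) hunit (hdeg ▸ ih)

end Lowering

section RestrictedMonomials

variable (K : Type*) [Field K] (p n : ℕ)

theorem Rsub_eq_span_image (ℓ : ℕ) :
    Rsub K p n ℓ = Submodule.span K
      ((monomial · (1 : K)) '' {k | k ≤ constExponent (Fin n) (p - 1) ∧ k.degree = ℓ}) := by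
  refine congrArg (Submodule.span K) (Set.ext fun q ↦ exists_congr fun k ↦ ?_)
  rw [Set.mem_ofPred_eq, Finsupp.degree_eq_sum, and_assoc, eq_comm (a := q)]
  rfl

theorem Rsub_top_eq_span_singleton :
    Rsub K p n (n * (p - 1)) =
      Submodule.span K {monomial (constExponent (Fin n) (p - 1)) (1 : K)} := by
  have hdeg : (constExponent (Fin n) (p - 1)).degree = n * (p - 1) := by
    rw [degree_constExponent, Fintype.card_fin]
  have hset : {k | k ≤ constExponent (Fin n) (p - 1) ∧ k.degree = n * (p - 1)} =
      {constExponent (Fin n) (p - 1)} := by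
    refine Set.eq_singleton_iff_unique_mem.2 ⟨⟨le_rfl, hdeg⟩, ?_⟩
    rintro k ⟨hle, hk⟩
    exact hle.eq_of_not_lt fun hlt ↦ (finsupp_degree_strictMono hlt).ne (hk.trans hdeg.symm)
  rw [Rsub_eq_span_image, hset, Set.image_singleton]

variable (W : Type*) [AddCommGroup W] [Module K W]

theorem WR_eq_map₂ (ℓ : ℕ) :
    WR K W p n ℓ = Submodule.map₂ (TensorProduct.mk K W _) ⊤ (Rsub K p n ℓ) := by
  rw [WR, LinearMap.lTensor, TensorProduct.range_map, LinearMap.range_id, Submodule.range_subtype]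

end RestrictedMonomials

theorem stmt0_general (p n : ℕ) (K : Type*) [Field K] (hp : ((p - 1)! : K) ≠ 0)
    (W : Type*) [AddCommGroup W] [Module K W]
    (F : ℕ → Submodule K (W ⊗[K] MvPolynomial (Fin n) K))
    (hF : F (n * (p - 1)) ≤ WR K W p n (n * (p - 1)))
    (hD : ∀ ℓ < n * (p - 1), ∀ i : Fin n,
      Submodule.map (LinearMap.lTensor W (pderiv i).toLinearMap) (F (ℓ + 1)) ≤ F ℓ) :
    ∃ W' : Submodule K W,
      F (n * (p - 1))
        = LinearMap.range (TensorProduct.map W'.subtype (Rsub K p n (n * (p - 1))).subtype)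
      ∧ ∀ ℓ ≤ n * (p - 1),
          LinearMap.range (TensorProduct.map W'.subtype (Rsub K p n ℓ).subtype) ≤ F ℓ := by
  set m := constExponent (Fin n) (p - 1)
  have hdeg : m.degree = n * (p - 1) := by rw [degree_constExponent, Fintype.card_fin]
  let tmulTop : W →ₗ[K] W ⊗[K] MvPolynomial (Fin n) K :=
    (TensorProduct.mk K W _).flip (monomial m 1)
  refine ⟨(F (n * (p - 1))).comap tmulTop, ?_, fun ℓ _ ↦ ?_⟩
  · have hF_range : F (n * (p - 1)) ≤ LinearMap.range tmulTop := by
      rwa [WR_eq_map₂, Rsub_top_eq_span_singleton, Submodule.map₂_span_singleton_eq_map_flip,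
        Submodule.map_top] at hF
    rw [← TensorProduct.mapIncl, TensorProduct.range_mapIncl, Rsub_top_eq_span_singleton,
      Submodule.map₂_span_singleton_eq_map_flip, Submodule.map_comap_eq_of_le hF_range]
  · rw [← TensorProduct.mapIncl, TensorProduct.range_mapIncl, Submodule.map₂_le]
    intro w hw
    suffices Rsub K p n ℓ ≤ (F ℓ).comap (TensorProduct.mk K W _ w) from this
    rw [Rsub_eq_span_image, Submodule.span_le, Set.image_subset_iff]
    rintro k ⟨hk, rfl⟩
    exact tmul_monomial_mem_of_le (hdeg ▸ hD) (fun _ ↦ hp.isUnit) (hdeg ▸ hw) hk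

theorem stmt0 (p : ℕ) (hp : p.Prime) (n : ℕ) (hn : 1 ≤ n)
    (K : Type*) [Field K] [CharP K p]
    (W : Type*) [AddCommGroup W] [Module K W] [FiniteDimensional K W]
    (F : ℕ → Submodule K (W ⊗[K] MvPolynomial (Fin n) K))
    (hF : ∀ ℓ ≤ n * (p - 1), F ℓ ≤ WR K W p n ℓ)
    (hD : ∀ ℓ, 1 ≤ ℓ → ℓ ≤ n * (p - 1) → ∀ i : Fin n,
      Submodule.map (LinearMap.lTensor W (pderiv i).toLinearMap) (F ℓ) ≤ F (ℓ - 1)) :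
    ∃ W' : Submodule K W,
      F (n * (p - 1))
        = LinearMap.range (TensorProduct.map W'.subtype (Rsub K p n (n * (p - 1))).subtype)
      ∧ ∀ ℓ ≤ n * (p - 1),
          LinearMap.range (TensorProduct.map W'.subtype (Rsub K p n ℓ).subtype) ≤ F ℓ := by
  have : Fact p.Prime := ⟨hp⟩
  have hfac := (IsUnit.natCast_factorial_iff_of_charP (A := K) p).2 (Nat.sub_one_lt hp.ne_zero)
  exact stmt0_general p n K hfac.ne_zero W F (hF _ le_rfl) fun ℓ hℓ ↦ hD (ℓ + 1) ℓ.succ_pos hℓ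
end

section
/- Let p be a prime, K a field of characteristic p, and n ≥ 1 an integer. For every integer ℓ with 0 ≤ ℓ ≤ n(p−1), the K-linear span of all ℓ-th order partial derivatives ∂^{a_1}/∂x_1^{a_1} ⋯ ∂^{a_n}/∂x_n^{a_n} (x_1⋯x_n)^{p−1}, taken over all multi-indices (a_1,…,a_n) of nonnegative integers with a_1+⋯+a_n = ℓ, is equal to R^{n(p−1)−ℓ}. -/
open MvPolynomial

/-- The iterated partial derivative `∂^{a₁}/∂x₁^{a₁} ⋯ ∂^{aₙ}/∂xₙ^{aₙ}` as a `K`-linear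
endomorphism of `K[x₁,…,xₙ]` (the individual partial derivatives commute). -/
noncomputable def iterPDeriv (K : Type*) [CommSemiring K] (n : ℕ) (a : Fin n → ℕ) :
    MvPolynomial (Fin n) K →ₗ[K] MvPolynomial (Fin n) K :=
  (List.ofFn fun i : Fin n => ((pderiv i : Derivation K _ _).toLinearMap ^ (a i))).prod

/-!
Differentiating a monomial gives `∂^a x^s = (∏ᵢ sᵢ (sᵢ - 1) ⋯ (sᵢ - aᵢ + 1)) x^(s - a)`. This
vanishes unless `a ≤ s`, and when `a ≤ s` the coefficient divides `∏ᵢ sᵢ!`. If every `sᵢ!` is a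
unit, the nonzero derivatives of order `ℓ` are therefore, up to units, the monomials `x^k` with
`k ≤ s` and `|k| = |s| - ℓ`. For `s = (p - 1, …, p - 1)` in characteristic `p`, `(p - 1)!` is a
unit.
-/

section Monomial

variable {σ R : Type*} [CommSemiring R]

theorem pderiv_pow_monomial (i : σ) (m : ℕ) (s : σ →₀ ℕ) (c : R) :
    ((pderiv i : Derivation R (MvPolynomial σ R) _).toLinearMap ^ m) (monomial s c) =
      monomial (s - Finsupp.single i m) (c * (s i).descFactorial m) := by
  induction m with
  | zero => simp
  | succ m ih =>
    have exponent : s - Finsupp.single i m - Finsupp.single i 1 = s - Finsupp.single i (m + 1) := by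
      rw [tsub_tsub, ← Finsupp.single_add]
    have coefficient : (s i).descFactorial m * (s - Finsupp.single i m) i =
        (s i).descFactorial (m + 1) := by
      rw [Finsupp.tsub_apply, Finsupp.single_eq_same, Nat.descFactorial_succ, mul_comm]
    rw [pow_succ', Module.End.mul_apply, ih, Derivation.coeFn_coe, pderiv_monomial, exponent,
      ← coefficient, Nat.cast_mul, mul_assoc]

theorem prod_map_pderiv_pow_monomial [DecidableEq σ] (a : σ → ℕ) {l : List σ} (hl : l.Nodup)
    (s : σ →₀ ℕ) (c : R) :
    (l.map fun i => (pderiv i : Derivation R (MvPolynomial σ R) _).toLinearMap ^ a i).prod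
        (monomial s c) =
      monomial (s - ∑ i ∈ l.toFinset, Finsupp.single i (a i))
        (c * ∏ i ∈ l.toFinset, ((s i).descFactorial (a i) : R)) := by
  induction l with
  | nil => simp
  | cons i l ih =>
    obtain ⟨hil, hl⟩ := List.nodup_cons.mp hl
    have hi : i ∉ l.toFinset := mt List.mem_toFinset.mp hil
    have exponent_at : (s - ∑ j ∈ l.toFinset, Finsupp.single j (a j)) i = s i := by
      simp [Finsupp.single_apply, hil]
    rw [List.map_cons, List.prod_cons, Module.End.mul_apply, ih hl, pderiv_pow_monomial,
      exponent_at, List.toFinset_cons, Finset.sum_insert hi, Finset.prod_insert hi, tsub_tsub,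
      add_comm (Finsupp.single i (a i)), mul_assoc, mul_comm (Nat.cast _)]

theorem prod_X_pow_eq_monomial_const [Fintype σ] (m : ℕ) :
    (∏ i : σ, X i : MvPolynomial σ R) ^ m =
      monomial (Finsupp.equivFunOnFinite.symm fun _ => m) 1 := by
  rw [monomial_eq, Finsupp.prod_fintype _ _ fun _ => pow_zero _]
  simp [Finset.prod_pow]

end Monomial

theorem isUnit_natCast_descFactorial {R : Type*} [Semiring R] {n k : ℕ}
    (hn : IsUnit (n.factorial : R)) (hk : k ≤ n) : IsUnit (n.descFactorial k : R) := by
  rw [← Nat.factorial_mul_descFactorial hk, Nat.cast_mul,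
    (Nat.cast_commute _ _).isUnit_mul_iff] at hn
  exact hn.2

section IterPDeriv

variable {R : Type*} [CommSemiring R] {n : ℕ}

theorem iterPDeriv_monomial (a s : Fin n →₀ ℕ) (c : R) :
    iterPDeriv R n a (monomial s c) =
      monomial (s - a) (c * ∏ i, ((s i).descFactorial (a i) : R)) := by
  rw [iterPDeriv, List.ofFn_eq_map, prod_map_pderiv_pow_monomial _ (List.nodup_finRange n),
    List.toFinset_finRange, Finsupp.univ_sum_single]

theorem iterPDeriv_monomial_eq_zero {a s : Fin n →₀ ℕ} (h : ¬a ≤ s) (c : R) :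
    iterPDeriv R n a (monomial s c) = 0 := by
  obtain ⟨i, hi⟩ : ∃ i, s i < a i := by simpa [Finsupp.le_def] using h
  have hprod : ∏ i, ((s i).descFactorial (a i) : R) = 0 :=
    Finset.prod_eq_zero (Finset.mem_univ i) (by rw [Nat.descFactorial_of_lt hi, Nat.cast_zero])
  rw [iterPDeriv_monomial, hprod, mul_zero, monomial_zero]

theorem exists_isUnit_iterPDeriv_monomial {a s : Fin n →₀ ℕ}
    (hs : ∀ i, IsUnit ((s i).factorial : R)) (h : a ≤ s) :
    ∃ u : R, IsUnit u ∧ iterPDeriv R n a (monomial s 1) = u • monomial (s - a) 1 :=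
  ⟨∏ i, ((s i).descFactorial (a i) : R),
    IsUnit.prod_univ_iff.mpr fun i => isUnit_natCast_descFactorial (hs i) (h i),
    by rw [iterPDeriv_monomial, smul_monomial, smul_eq_mul, mul_comm]⟩

theorem span_iterPDeriv_monomial (s : Fin n →₀ ℕ) (hs : ∀ i, IsUnit ((s i).factorial : R)) (ℓ : ℕ) :
    Submodule.span R { q | ∃ a : Fin n →₀ ℕ, a.degree = ℓ ∧ q = iterPDeriv R n a (monomial s 1) } =
      Submodule.span R { q | ∃ k ≤ s, k.degree + ℓ = s.degree ∧ q = monomial k 1 } := by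
  apply le_antisymm <;> rw [Submodule.span_le]
  · rintro _ ⟨a, ha, rfl⟩
    by_cases h : a ≤ s
    · obtain ⟨u, -, hu⟩ := exists_isUnit_iterPDeriv_monomial hs h
      have hdeg : (s - a).degree + ℓ = s.degree := by
        rw [← ha, ← map_add, tsub_add_cancel_of_le h]
      rw [SetLike.mem_coe, hu]
      exact Submodule.smul_mem _ u (Submodule.subset_span ⟨s - a, tsub_le_self, hdeg, rfl⟩)
    · rw [iterPDeriv_monomial_eq_zero h]
      exact Submodule.zero_mem _
  · rintro _ ⟨k, hk, hdeg, rfl⟩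
    obtain ⟨u, hu, hderiv⟩ := exists_isUnit_iterPDeriv_monomial hs (tsub_le_self : s - k ≤ s)
    have ha : (s - k).degree = ℓ := by
      rw [← tsub_add_cancel_of_le hk, map_add] at hdeg
      omega
    rw [tsub_tsub_cancel_of_le hk] at hderiv
    rw [SetLike.mem_coe, ← Submodule.smul_mem_iff_of_isUnit _ hu, ← hderiv]
    exact Submodule.subset_span ⟨s - k, ha, rfl⟩

theorem stmt3_general (m : ℕ) (hm : IsUnit (m.factorial : R)) {ℓ : ℕ} (hℓ : ℓ ≤ n * m) :
    Submodule.span R { q : MvPolynomial (Fin n) R | ∃ a : Fin n → ℕ, (∑ i, a i) = ℓ ∧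
        q = iterPDeriv R n a ((∏ i : Fin n, X i) ^ m) } =
      Submodule.span R { q | ∃ k : Fin n →₀ ℕ, (∀ i, k i ≤ m) ∧ (∑ i, k i) = n * m - ℓ ∧
        q = monomial k 1 } := by
  have hdeg (d : ℕ) : d = n * m - ℓ ↔ d + ℓ = n * m := by omega
  have hspan := span_iterPDeriv_monomial (Finsupp.equivFunOnFinite.symm fun _ : Fin n => m)
    (fun _ => hm) ℓ
  simpa [prod_X_pow_eq_monomial_const, Finsupp.equivFunOnFinite.symm.surjective.exists,
    Finsupp.le_def, Finsupp.degree_eq_sum, hdeg] using hspan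

end IterPDeriv

theorem stmt3 (p : ℕ) (hp : p.Prime) (n : ℕ) (hn : 1 ≤ n)
    (K : Type*) [Field K] [CharP K p] (ℓ : ℕ) (hℓ : ℓ ≤ n * (p - 1)) :
    Submodule.span K { q : MvPolynomial (Fin n) K | ∃ a : Fin n → ℕ, (∑ i, a i) = ℓ ∧
        q = iterPDeriv K n a ((∏ i : Fin n, X i) ^ (p - 1)) }
      = Rsub K p n (n * (p - 1) - ℓ) := by
  have : Fact p.Prime := ⟨hp⟩
  exact stmt3_general (p - 1)
    ((IsUnit.natCast_factorial_iff_of_charP p).mpr (Nat.sub_one_lt hp.ne_zero)) hℓ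
end

section
/- Let N be a natural number, m ≤ N a natural number, and r : ℕ → ℤ a function with r_ℓ = 0 for all ℓ > m. Then ∑_{ℓ=0}^{m} (N − 2ℓ) r_ℓ = ∑_{ℓ=m+1}^{N} (2ℓ − N) r_{N−ℓ} + ∑_{ℓ ≤ m, 2ℓ > N} (2ℓ − N)(r_{N−ℓ} − r_ℓ). -/
/-!
Put `f ℓ = (N - 2ℓ) r_ℓ`, so that `f (N - ℓ) = (2ℓ - N) r_{N - ℓ}`. The terms of `∑_{ℓ ≤ m} f ℓ`
with `N < 2ℓ` stand on both sides. Those with `2ℓ < N` are turned by the reflection `ℓ ↦ N - ℓ`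
into a sum of `f (N - ℓ)` over `N < 2ℓ ≤ 2N`, which is then cut at `ℓ = m`; as `f` vanishes
strictly between `m` and `N - m`, extending or restricting the ranges of summation costs nothing.
-/

open Finset

section Folding

variable {M : Type*} [AddCommMonoid M]

theorem sum_eq_sum_filter_lt_add_sum_filter_gt {ι α : Type*} [LinearOrder α] (s : Finset ι)
    (f : ι → M) (g : ι → α) (a : α) (hf : ∀ i ∈ s, g i = a → f i = 0) :
    ∑ i ∈ s, f i = ∑ i ∈ s with g i < a, f i + ∑ i ∈ s with a < g i, f i := by
  rw [sum_filter, sum_filter, ← sum_add_distrib]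
  refine sum_congr rfl fun i hi => ?_
  rcases lt_trichotomy (g i) a with h | h | h
  · rw [if_pos h, if_neg h.not_gt, add_zero]
  · rw [if_neg h.not_lt, if_neg h.not_gt, add_zero, hf i hi h]
  · rw [if_neg h.not_gt, if_pos h, zero_add]

theorem sum_range_filter_two_mul_lt_eq_sum_reflect (N : ℕ) (f : ℕ → M) :
    ∑ ℓ ∈ range (N + 1) with 2 * ℓ < N, f ℓ = ∑ ℓ ∈ range (N + 1) with N < 2 * ℓ, f (N - ℓ) := by
  rw [sum_filter, sum_filter, ← sum_flip]
  refine sum_congr rfl fun ℓ hℓ => if_congr ?_ rfl rfl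
  have hℓN : ℓ < N + 1 := mem_range.mp hℓ
  omega

theorem sum_range_filter_two_mul_lt_eq_sum_Icc_reflect_add {m N : ℕ} (hm : m ≤ N) (f : ℕ → M)
    (hf : ∀ ℓ, m < ℓ → ℓ + m < N → f ℓ = 0) :
    ∑ ℓ ∈ range (m + 1) with 2 * ℓ < N, f ℓ
      = ∑ ℓ ∈ Icc (m + 1) N, f (N - ℓ) + ∑ ℓ ∈ range (m + 1) with N < 2 * ℓ, f (N - ℓ) := by
  have extend : ∑ ℓ ∈ range (m + 1) with 2 * ℓ < N, f ℓ
      = ∑ ℓ ∈ range (N + 1) with 2 * ℓ < N, f ℓ := by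
    refine sum_subset (filter_subset_filter _ (range_mono (by omega))) fun ℓ hℓ hℓm => ?_
    simp only [mem_filter, mem_range] at hℓ hℓm
    exact hf ℓ (by omega) (by omega)
  have restrict : ∑ ℓ ∈ Icc (m + 1) N with N < 2 * ℓ, f (N - ℓ)
      = ∑ ℓ ∈ Icc (m + 1) N, f (N - ℓ) := by
    refine sum_subset (filter_subset _ _) fun ℓ hℓ hℓN => ?_
    simp only [mem_filter, mem_Icc] at hℓ hℓN
    exact hf (N - ℓ) (by omega) (by omega)
  have cut : ∑ ℓ ∈ range (N + 1) with N < 2 * ℓ, f (N - ℓ)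
      = ∑ ℓ ∈ range (m + 1) with N < 2 * ℓ, f (N - ℓ)
        + ∑ ℓ ∈ Icc (m + 1) N with N < 2 * ℓ, f (N - ℓ) := by
    simp only [sum_filter]
    rw [← Ico_add_one_right_eq_Icc, sum_range_add_sum_Ico _ (by omega)]
  rw [extend, sum_range_filter_two_mul_lt_eq_sum_reflect, cut, restrict, add_comm]

theorem sum_range_succ_eq_sum_Icc_reflect_add_sum_fold {m N : ℕ} (hm : m ≤ N) (f : ℕ → M)
    (hf : ∀ ℓ, m < ℓ → ℓ + m < N → f ℓ = 0) (hmid : ∀ ℓ, 2 * ℓ = N → f ℓ = 0) :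
    ∑ ℓ ∈ range (m + 1), f ℓ
      = ∑ ℓ ∈ Icc (m + 1) N, f (N - ℓ)
        + ∑ ℓ ∈ range (m + 1) with N < 2 * ℓ, (f (N - ℓ) + f ℓ) := by
  rw [sum_eq_sum_filter_lt_add_sum_filter_gt _ f (2 * ·) N fun ℓ _ => hmid ℓ,
    sum_range_filter_two_mul_lt_eq_sum_Icc_reflect_add hm f hf, sum_add_distrib, add_assoc]

end Folding

theorem stmt8_general {M : Type*} [AddCommGroup M] (N m : ℕ) (hm : m ≤ N) (r : ℕ → M)
    (hr : ∀ ℓ, m < ℓ → ℓ + m < N → r ℓ = 0) :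
    ∑ ℓ ∈ range (m + 1), ((N : ℤ) - 2 * ℓ) • r ℓ
      = ∑ ℓ ∈ Icc (m + 1) N, (2 * (ℓ : ℤ) - N) • r (N - ℓ)
        + ∑ ℓ ∈ range (m + 1) with N < 2 * ℓ, (2 * (ℓ : ℤ) - N) • (r (N - ℓ) - r ℓ) := by
  have weight_reflect {ℓ : ℕ} (hℓ : ℓ ≤ N) : (N : ℤ) - 2 * (N - ℓ : ℕ) = 2 * ℓ - N := by omega
  have weight_mid {ℓ : ℕ} (hℓ : 2 * ℓ = N) : (N : ℤ) - 2 * ℓ = 0 := by omega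
  rw [sum_range_succ_eq_sum_Icc_reflect_add_sum_fold hm (fun ℓ => ((N : ℤ) - 2 * ℓ) • r ℓ)
    (fun ℓ hℓm hℓN => by rw [hr ℓ hℓm hℓN, smul_zero])
    (fun ℓ hℓ => by rw [weight_mid hℓ, zero_smul])]
  congr 1
  · refine sum_congr rfl fun ℓ hℓ => ?_
    rw [weight_reflect (mem_Icc.mp hℓ).2]
  · refine sum_congr rfl fun ℓ hℓ => ?_
    have hℓm : ℓ < m + 1 := mem_range.mp (mem_filter.mp hℓ).1
    rw [weight_reflect (by omega), ← neg_sub (2 * (ℓ : ℤ)), neg_smul, ← sub_eq_add_neg, smul_sub]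

theorem stmt8 (N m : ℕ) (hm : m ≤ N) (r : ℕ → ℤ) (hr : ∀ ℓ, m < ℓ → r ℓ = 0) :
    ∑ ℓ ∈ Finset.range (m + 1), ((N : ℤ) - 2 * ℓ) * r ℓ
      = ∑ ℓ ∈ Finset.Icc (m + 1) N, (2 * (ℓ : ℤ) - N) * r (N - ℓ)
        + ∑ ℓ ∈ (Finset.range (m + 1)).filter (fun ℓ => N < 2 * ℓ),
            (2 * (ℓ : ℤ) - N) * (r (N - ℓ) - r ℓ) := by
  simpa only [smul_eq_mul] using stmt8_general N m hm r fun ℓ hℓ _ => hr ℓ hℓ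
end

section
/- Let p ≥ 3 be an integer, set N = 2p−2, and let m be a natural number with p−1 < m < N. Let r : ℕ → ℕ satisfy: r_ℓ ≥ 1 for all ℓ ≤ m; r_ℓ = 0 for all ℓ > m; and r_{N−ℓ} ≥ r_ℓ for every ℓ ≤ N with 2ℓ > N. If ∑_{ℓ=1}^{m} (p−1−ℓ) r_ℓ ≤ 1, then m + 1 > 2p − 3, i.e. m ≥ 2p−3. -/
/-!
The weight `p - 1 - ℓ` is odd about `ℓ = p - 1`, so pairing `ℓ` with `2p - 2 - ℓ` turns the weighted
sum into `∑_{1 ≤ ℓ < p - 1} (p - 1 - ℓ) (r_ℓ - r_{2p-2-ℓ})`, whose terms are all nonnegative. If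
`m < 2p - 3`, then `r_{2p-3} = 0` and the term `ℓ = 1` alone equals `(p - 2) r_1`. Since
`p - 1 < m < 2p - 3` forces `p ≥ 4`, this is at least `2`.
-/

open Finset

theorem sum_Ico_eq_sum_add_reflect {M : Type*} [AddCommMonoid M] (f : ℕ → M) {a c : ℕ}
    (hac : a ≤ c) :
    ∑ ℓ ∈ Ico a (2 * c + 1 - a), f ℓ = ∑ ℓ ∈ Ico a c, (f ℓ + f (2 * c - ℓ)) + f c := by
  have upper_half :
      ∑ ℓ ∈ Ico a c, f (2 * c - ℓ) = ∑ ℓ ∈ Ico (c + 1) (2 * c + 1 - a), f ℓ := by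
    rw [sum_Ico_reflect f a (by lia), show 2 * c + 1 - c = c + 1 by lia]
  rw [← sum_Ico_consecutive f hac (by lia), sum_eq_sum_Ico_succ_bot (a := c) (by lia),
    sum_add_distrib, upper_half, add_assoc, add_comm (f c)]

theorem sum_Ico_sub_mul_eq_sum_sub_reflect {R : Type*} [Ring R] (r : ℕ → R) {a c : ℕ}
    (hac : a ≤ c) :
    ∑ ℓ ∈ Ico a (2 * c + 1 - a), ((c : R) - ℓ) * r ℓ
      = ∑ ℓ ∈ Ico a c, ((c : R) - ℓ) * (r ℓ - r (2 * c - ℓ)) := by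
  rw [sum_Ico_eq_sum_add_reflect _ hac, sub_self, zero_mul, add_zero]
  refine sum_congr rfl fun ℓ hℓ ↦ ?_
  have weight_reflect : (c : R) - (2 * c - ℓ : ℕ) = -(c - ℓ) := by
    rw [Nat.cast_sub (by have := mem_Ico.mp hℓ; lia)]
    push_cast
    noncomm_ring
  rw [weight_reflect, neg_mul, ← sub_eq_add_neg, ← mul_sub]

theorem sub_mul_sub_reflect_le_sum_Ico {R : Type*} [Ring R] [PartialOrder R] [IsOrderedRing R]
    {r : ℕ → R} {a c : ℕ} (hac : a ≤ c) (hr : ∀ ℓ ∈ Ico a c, r (2 * c - ℓ) ≤ r ℓ) :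
    ((c : R) - a) * (r a - r (2 * c - a)) ≤ ∑ ℓ ∈ Ico a (2 * c + 1 - a), ((c : R) - ℓ) * r ℓ := by
  rw [sum_Ico_sub_mul_eq_sum_sub_reflect r hac]
  rcases hac.eq_or_lt with rfl | hlt
  · simp
  · refine single_le_sum (f := fun ℓ ↦ ((c : R) - ℓ) * (r ℓ - r (2 * c - ℓ)))
      (fun ℓ hℓ ↦ mul_nonneg ?_ (sub_nonneg.mpr (hr ℓ hℓ))) (left_mem_Ico.mpr hlt)
    exact sub_nonneg.mpr (Nat.mono_cast (mem_Ico.mp hℓ).2.le)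

theorem stmt10_general {R : Type*} [Ring R] [PartialOrder R] [IsOrderedRing R] {p m : ℕ}
    {r : ℕ → R} (hzero : ∀ ℓ, m < ℓ → r ℓ = 0)
    (hsym : ∀ ℓ ≤ 2 * p - 2, 2 * p - 2 < 2 * ℓ → r ℓ ≤ r (2 * p - 2 - ℓ))
    (hS : ∑ ℓ ∈ Icc 1 m, ((p : R) - 1 - ℓ) * r ℓ < ((p : R) - 2) * r 1) :
    2 * p - 3 ≤ m := by
  by_contra! hm
  obtain ⟨c, rfl⟩ : ∃ c, p = c + 1 := ⟨p - 1, by lia⟩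
  have reflect_le : ∀ ℓ ∈ Ico 1 c, r (2 * c - ℓ) ≤ r ℓ := fun ℓ hℓ ↦ by
    have ⟨_, hℓc⟩ := mem_Ico.mp hℓ
    simpa only [show 2 * (c + 1) - 2 - (2 * c - ℓ) = ℓ by lia] using
      hsym (2 * c - ℓ) (by lia) (by lia)
  have sum_extend : ∑ ℓ ∈ Icc 1 m, ((c : R) - ℓ) * r ℓ
      = ∑ ℓ ∈ Ico 1 (2 * c + 1 - 1), ((c : R) - ℓ) * r ℓ := by
    refine sum_subset (fun ℓ hℓ ↦ ?_) fun ℓ hℓ hℓm ↦ ?_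
    · simp only [mem_Icc, mem_Ico] at hℓ ⊢
      lia
    · simp only [mem_Icc, mem_Ico] at hℓ hℓm
      rw [hzero ℓ (by lia), mul_zero]
  refine hS.not_ge ?_
  calc (((c + 1 : ℕ) : R) - 2) * r 1
      = ((c : R) - (1 : ℕ)) * (r 1 - r (2 * c - 1)) := by
        rw [hzero (2 * c - 1) (by lia), sub_zero]
        congr 1
        push_cast
        rw [← one_add_one_eq_two, add_sub_add_right_eq_sub]
    _ ≤ ∑ ℓ ∈ Ico 1 (2 * c + 1 - 1), ((c : R) - ℓ) * r ℓ :=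
        sub_mul_sub_reflect_le_sum_Ico (by lia) reflect_le
    _ = ∑ ℓ ∈ Icc 1 m, (((c + 1 : ℕ) : R) - 1 - ℓ) * r ℓ := by
        simp only [← sum_extend, Nat.cast_add_one, add_sub_cancel_right]

theorem stmt10 (p : ℕ) (hp : 3 ≤ p) (m : ℕ) (hm1 : p - 1 < m) (hm2 : m < 2 * p - 2)
    (r : ℕ → ℕ) (hpos : ∀ ℓ ≤ m, 1 ≤ r ℓ) (hzero : ∀ ℓ, m < ℓ → r ℓ = 0)
    (hsym : ∀ ℓ ≤ 2 * p - 2, 2 * p - 2 < 2 * ℓ → r ℓ ≤ r (2 * p - 2 - ℓ))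
    (hS : ∑ ℓ ∈ Finset.Icc 1 m, ((p : ℤ) - 1 - ℓ) * r ℓ ≤ 1) :
    2 * p - 3 ≤ m := by
  by_contra! hm
  have two_le : (2 : ℤ) ≤ p - 2 := by lia
  have one_lt : (1 : ℤ) < (p - 2) * r 1 := by nlinarith [hpos 1 (by lia)]
  exact hm.not_ge <| stmt10_general (r := fun ℓ ↦ (r ℓ : ℤ))
    (mod_cast hzero) (mod_cast hsym) (hS.trans_lt one_lt)
end
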